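/- arXiv:2102.08714 — 2 statements merged into one kernel-verified Lean document; each statement's English description precedes it below -/
import Mathlib

section
/- Let Ω ⊆ ℝ² be an open simply connected set and let z ∈ C²(Ω). Set W = √(1 + z_x² + z_y²). Then z satisfies the minimal surface equation z_xx(1+z_y²) + z_yy(1+z_x²) − 2 z_x z_y z_xy = 0 on Ω if and only if there exist functions a, b, c ∈ C²(Ω) such that on Ω: ∇a = (W⁻¹ z_x z_y, W⁻¹(1+z_y²)), ∇b = (−W⁻¹(1+z_x²), −W⁻¹ z_x z_y), and ∇c = (−W⁻¹ z_y, W⁻¹ z_x). (These three gradient conditions express that the vector-valued 1-form N ∧ dX, for the nonparametric surface X(x,y) = (x,y,z(x,y)) with unit normal N = W⁻¹(−z_x, −z_y, 1), is a total differential −dX*.) -/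
open Real Filter Set

/-- Partial derivative in the `x`-direction. -/
noncomputable def pdx (f : ℝ × ℝ → ℝ) (p : ℝ × ℝ) : ℝ := fderiv ℝ f p (1, 0)

/-- Partial derivative in the `y`-direction. -/
noncomputable def pdy (f : ℝ × ℝ → ℝ) (p : ℝ × ℝ) : ℝ := fderiv ℝ f p (0, 1)

/-- The area element `W = √(1 + z_x² + z_y²)`. -/
noncomputable def Wel (z : ℝ × ℝ → ℝ) (p : ℝ × ℝ) : ℝ :=
  Real.sqrt (1 + (pdx z p) ^ 2 + (pdy z p) ^ 2)

open scoped Topology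

/-- On a simply connected, locally path connected space, functions on an open cover which pairwise
differ by locally constant functions come, up to locally constant functions, from a global one. -/
theorem exists_glue_of_sub_locally_const {X A : Type*} [TopologicalSpace X]
    [SimplyConnectedSpace X] [LocallyPathConnectedSpace X] [AddCommGroup A]
    (U : X → Set X) (hU : ∀ i, IsOpen (U i)) (hmem : ∀ i, i ∈ U i) (f : X → X → A)
    (hf : ∀ i j, ∀ x ∈ U i ∩ U j, ∀ᶠ y in 𝓝 x, f i y - f j y = f i x - f j x) :
    ∃ g : X → A, ∀ i, ∀ x ∈ U i, ∀ᶠ y in 𝓝 x, g y - f i y = g x - f i x := by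
  let _ : TopologicalSpace A := ⊥
  have : DiscreteTopology A := ⟨rfl⟩
  let Z : FiberBundleCore X X A :=
    { baseSet := U
      isOpen_baseSet := hU
      indexAt := id
      mem_baseSet_at := hmem
      coordChange := fun i j x v => v + (f i x - f j x)
      coordChange_self := by intros; simp
      continuousOn_coordChange := by
        rintro i j ⟨x, v⟩ ⟨hx, -⟩
        apply ContinuousAt.continuousWithinAt
        refine continuousAt_snd.add ?_
        have h : ContinuousAt (fun y => f i y - f j y) x :=
          continuousAt_const.congr ((hf i j x hx).mono fun _ h => h.symm)
        exact h.comp (f := Prod.fst) (x := (x, v)) continuousAt_fst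
      coordChange_comp := by intros; abel }
  have cov : IsCoveringMap (Bundle.TotalSpace.proj : Z.TotalSpace → X) :=
    FiberBundle.isCoveringMap
  obtain ⟨x₀⟩ : Nonempty X := inferInstance
  obtain ⟨s, ⟨-, hs⟩, -⟩ := cov.existsUnique_continuousMap_lifts (ContinuousMap.id X) x₀
    (⟨x₀, (0 : A)⟩ : Z.TotalSpace) rfl
  have hproj : ∀ x, (s x).proj = x := congrFun hs
  refine ⟨fun x => (id (s x).snd : A) + f x x, fun i x hx => ?_⟩
  have hsrc : s x ∈ (Z.localTriv i).source := by
    rw [Z.mem_localTriv_source, hproj]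
    exact hx
  have hcont : ContinuousAt (fun y => (Z.localTriv i (s y)).2) x :=
    continuousAt_snd.comp
      (((Z.localTriv i).continuousAt hsrc).comp s.continuous.continuousAt)
  have hval : ∀ y, (Z.localTriv i (s y)).2 = (id (s y).snd : A) + (f y y - f i y) := by
    intro y
    rw [Z.localTriv_apply]
    change (id (s y).snd : A) + (f (s y).proj (s y).proj - f i (s y).proj) = _
    rw [hproj]
  filter_upwards [hcont.eventually_mem ((isOpen_discrete {(Z.localTriv i (s x)).2}).mem_nhds rfl)]
    with y hy
  rw [mem_singleton_iff, hval, hval] at hy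
  simpa only [add_sub_assoc] using hy

/-- A `1`-form with local primitives on a simply connected open set has a global primitive. -/
theorem IsOpen.exists_hasFDerivAt_of_locally_exact {E F : Type*} [NormedAddCommGroup E]
    [NormedSpace ℝ E] [NormedAddCommGroup F] [NormedSpace ℝ F] {Ω : Set E} (hΩ : IsOpen Ω)
    [SimplyConnectedSpace Ω] {ω : E → E →L[ℝ] F}
    (hω : ∀ x ∈ Ω, ∃ r > 0, ∃ f : E → F, ∀ y ∈ Metric.ball x r, HasFDerivAt f (ω y) y) :
    ∃ f : E → F, ∀ x ∈ Ω, HasFDerivAt f (ω x) x := by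
  classical
  have := hΩ.locallyPathConnectedSpace
  choose r hr f hf using fun x : Ω => hω x x.2
  have hloc : ∀ {u v : E → F} {x : E}, (∀ᶠ y in 𝓝 x, HasFDerivAt u (ω y) y) →
      (∀ᶠ y in 𝓝 x, HasFDerivAt v (ω y) y) → ∀ᶠ y in 𝓝 x, u y - v y = u x - v x := by
    intro u v x hu hv
    obtain ⟨ε, hε, h⟩ := Metric.eventually_nhds_iff_ball.1 (hu.and hv)
    filter_upwards [Metric.ball_mem_nhds x hε] with y hy
    refine (convex_ball x ε).is_const_of_fderivWithin_eq_zero (𝕜 := ℝ) (f := fun y => u y - v y)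
      (fun w hw => ((h w hw).1.sub (h w hw).2).differentiableAt.differentiableWithinAt)
      (fun w hw => ?_) hy (Metric.mem_ball_self hε)
    rw [fderivWithin_of_isOpen Metric.isOpen_ball hw,
      ((h w hw).1.fun_sub (h w hw).2).fderiv, sub_self]
  have hball : ∀ (i x : Ω), (x : E) ∈ Metric.ball (i : E) (r i) →
      ∀ᶠ y in 𝓝 (x : E), HasFDerivAt (f i) (ω y) y := fun i x hx =>
    (Metric.isOpen_ball.eventually_mem hx).mono (hf i)
  obtain ⟨g, hg⟩ := exists_glue_of_sub_locally_const
    (fun i : Ω => {x : Ω | (x : E) ∈ Metric.ball (i : E) (r i)})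
    (fun i => Metric.isOpen_ball.preimage continuous_subtype_val)
    (fun i => Metric.mem_ball_self (hr i)) (fun i x => f i x) (fun i j x hx =>
      continuous_subtype_val.continuousAt.eventually (hloc (hball i x hx.1) (hball j x hx.2)))
  refine ⟨fun x => if h : x ∈ Ω then g ⟨x, h⟩ else 0, fun x hx => ?_⟩
  have hself : x ∈ Metric.ball x (r ⟨x, hx⟩) := Metric.mem_ball_self (hr ⟨x, hx⟩)
  have hev := hg ⟨x, hx⟩ ⟨x, hx⟩ hself
  have heq : (fun y => if h : y ∈ Ω then g ⟨y, h⟩ else 0) =ᶠ[𝓝 x]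
      fun y => f ⟨x, hx⟩ y + (g ⟨x, hx⟩ - f ⟨x, hx⟩ x) := by
    rw [EventuallyEq, ← map_nhds_subtype_coe_eq_nhds hx (hΩ.mem_nhds hx), eventually_map]
    filter_upwards [hev] with y hy
    rw [dif_pos y.2, ← hy]
    abel
  exact ((hf ⟨x, hx⟩ x hself).add_const _).congr_of_eventuallyEq heq

/-- On a simply connected open set, a closed `C¹` form `P dx + Q dy` has a `C²` primitive. -/
theorem exists_primitive_of_pdy_eq_pdx {Ω : Set (ℝ × ℝ)} (hΩ : IsOpen Ω)
    [SimplyConnectedSpace Ω] {P Q : ℝ × ℝ → ℝ} (hP : ContDiffOn ℝ 1 P Ω)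
    (hQ : ContDiffOn ℝ 1 Q Ω) (hPQ : ∀ p ∈ Ω, pdy P p = pdx Q p) :
    ∃ f : ℝ × ℝ → ℝ, ContDiffOn ℝ 2 f Ω ∧ ∀ p ∈ Ω, pdx f p = P p ∧ pdy f p = Q p := by
  let ω : ℝ × ℝ → ℝ × ℝ →L[ℝ] ℝ := fun p =>
    P p • ContinuousLinearMap.fst ℝ ℝ ℝ + Q p • ContinuousLinearMap.snd ℝ ℝ ℝ
  have hωC : ContDiffOn ℝ 1 ω Ω := (hP.smul contDiffOn_const).add (hQ.smul contDiffOn_const)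
  have hsymm : ∀ a ∈ Ω, ∀ u v, fderiv ℝ ω a u v = fderiv ℝ ω a v u := by
    intro a ha u v
    have hP' := ((hP.differentiableOn one_ne_zero).differentiableAt (hΩ.mem_nhds ha)).hasFDerivAt
    have hQ' := ((hQ.differentiableOn one_ne_zero).differentiableAt (hΩ.mem_nhds ha)).hasFDerivAt
    have hω' : HasFDerivAt ω _ a := (hP'.smul_const (ContinuousLinearMap.fst ℝ ℝ ℝ)).add
      (hQ'.smul_const (ContinuousLinearMap.snd ℝ ℝ ℝ))
    have hdec : ∀ (L : ℝ × ℝ →L[ℝ] ℝ) (w : ℝ × ℝ), L w = w.1 * L (1, 0) + w.2 * L (0, 1) := by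
      intro L w
      conv_lhs => rw [show w = w.1 • ((1, 0) : ℝ × ℝ) + w.2 • ((0, 1) : ℝ × ℝ) by ext <;> simp]
      simp only [map_add, map_smul, smul_eq_mul]
    have h := hPQ a ha
    simp only [pdx, pdy] at h
    rw [hω'.fderiv]
    simp only [add_apply, ContinuousLinearMap.smulRight_apply,
      smul_apply, ContinuousLinearMap.coe_fst', ContinuousLinearMap.coe_snd',
      smul_eq_mul]
    rw [hdec _ u, hdec _ v, hdec (fderiv ℝ Q a) u, hdec (fderiv ℝ Q a) v, h]
    ring
  obtain ⟨f, hf⟩ := hΩ.exists_hasFDerivAt_of_locally_exact (ω := ω) fun x hx => by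
    obtain ⟨r, hr, hsub⟩ := Metric.isOpen_iff.1 hΩ x hx
    exact ⟨r, hr, (convex_ball x r).exists_forall_hasFDerivAt_of_fderiv_symmetric
      Metric.isOpen_ball ((hωC.differentiableOn one_ne_zero).mono hsub)
      fun a ha => hsymm a (hsub ha)⟩
  refine ⟨f, ?_, fun p hp => ?_⟩
  · rw [show (2 : WithTop ℕ∞) = 1 + 1 from one_add_one_eq_two.symm,
      contDiffOn_succ_iff_fderiv_of_isOpen hΩ]
    exact ⟨fun x hx => (hf x hx).differentiableAt.differentiableWithinAt, by simp,
      hωC.congr fun x hx => (hf x hx).fderiv⟩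
  · simp [pdx, pdy, (hf p hp).fderiv, ω]

theorem contDiffOn_pdx {Ω : Set (ℝ × ℝ)} (hΩ : IsOpen Ω) {f : ℝ × ℝ → ℝ}
    (hf : ContDiffOn ℝ 2 f Ω) : ContDiffOn ℝ 1 (pdx f) Ω :=
  (hf.fderiv_of_isOpen hΩ (by norm_num)).clm_apply contDiffOn_const

theorem contDiffOn_pdy {Ω : Set (ℝ × ℝ)} (hΩ : IsOpen Ω) {f : ℝ × ℝ → ℝ}
    (hf : ContDiffOn ℝ 2 f Ω) : ContDiffOn ℝ 1 (pdy f) Ω :=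
  (hf.fderiv_of_isOpen hΩ (by norm_num)).clm_apply contDiffOn_const

/-- Equality of mixed partial derivatives of a `C²` function. -/
theorem pdy_pdx_eq_pdx_pdy {Ω : Set (ℝ × ℝ)} (hΩ : IsOpen Ω) {f : ℝ × ℝ → ℝ}
    (hf : ContDiffOn ℝ 2 f Ω) {p : ℝ × ℝ} (hp : p ∈ Ω) : pdy (pdx f) p = pdx (pdy f) p := by
  have hd : DifferentiableAt ℝ (fderiv ℝ f) p :=
    ((hf.fderiv_of_isOpen hΩ (m := 1) (by norm_num)).differentiableOn
      one_ne_zero).differentiableAt (hΩ.mem_nhds hp)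
  have hsymm : IsSymmSndFDerivAt ℝ f p :=
    (hf.contDiffAt (hΩ.mem_nhds hp)).isSymmSndFDerivAt (by simp)
  have happ : ∀ v w : ℝ × ℝ, fderiv ℝ (fun q => fderiv ℝ f q v) p w =
      fderiv ℝ (fderiv ℝ f) p w v := by
    intro v w
    have h := hd.hasFDerivAt.clm_apply (hasFDerivAt_const v p)
    rw [h.fderiv]
    simp
  have h := hsymm (0, 1) (1, 0)
  rwa [← happ, ← happ] at h

theorem pdx_congr {Ω : Set (ℝ × ℝ)} (hΩ : IsOpen Ω) {f g : ℝ × ℝ → ℝ}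
    (h : ∀ p ∈ Ω, f p = g p) {p : ℝ × ℝ} (hp : p ∈ Ω) : pdx f p = pdx g p := by
  rw [pdx, pdx, (Filter.eventuallyEq_of_mem (hΩ.mem_nhds hp) h).fderiv_eq]

theorem pdy_congr {Ω : Set (ℝ × ℝ)} (hΩ : IsOpen Ω) {f g : ℝ × ℝ → ℝ}
    (h : ∀ p ∈ Ω, f p = g p) {p : ℝ × ℝ} (hp : p ∈ Ω) : pdy f p = pdy g p := by
  rw [pdy, pdy, (Filter.eventuallyEq_of_mem (hΩ.mem_nhds hp) h).fderiv_eq]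

theorem Wel_pos (z : ℝ × ℝ → ℝ) (p : ℝ × ℝ) : 0 < Wel z p :=
  Real.sqrt_pos.2 (by positivity)

theorem Wel_sq (z : ℝ × ℝ → ℝ) (p : ℝ × ℝ) : Wel z p ^ 2 = 1 + pdx z p ^ 2 + pdy z p ^ 2 :=
  Real.sq_sqrt (by positivity)

theorem contDiffOn_Wel_inv {Ω : Set (ℝ × ℝ)} (hΩ : IsOpen Ω) {z : ℝ × ℝ → ℝ}
    (hz : ContDiffOn ℝ 2 z Ω) : ContDiffOn ℝ 1 (fun p => (Wel z p)⁻¹) Ω := by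
  refine ContDiffOn.inv (ContDiffOn.sqrt ?_ fun p _ => ?_) fun p _ => (Wel_pos z p).ne'
  · exact (contDiffOn_const.add ((contDiffOn_pdx hΩ hz).pow 2)).add ((contDiffOn_pdy hΩ hz).pow 2)
  · positivity

theorem hasFDerivAt_Wel_inv {z : ℝ × ℝ → ℝ} {p : ℝ × ℝ} (hx : DifferentiableAt ℝ (pdx z) p)
    (hy : DifferentiableAt ℝ (pdy z) p) :
    HasFDerivAt (fun q => (Wel z q)⁻¹) (-((Wel z p)⁻¹ ^ 3) •
      (pdx z p • fderiv ℝ (pdx z) p + pdy z p • fderiv ℝ (pdy z) p)) p := by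
  have hW := (Wel_pos z p).ne'
  have h := (((hx.hasFDerivAt.pow 2).const_add 1).add (hy.hasFDerivAt.pow 2)).sqrt
    (show 1 + pdx z p ^ 2 + pdy z p ^ 2 ≠ 0 by positivity)
  have h' := (hasDerivAt_inv hW).comp_hasFDerivAt p h
  refine h'.congr_fderiv ?_
  have hdef : √(1 + pdx z p ^ 2 + pdy z p ^ 2) = Wel z p := rfl
  ext <;>
  · simp [hdef]
    field_simp

/-- The integrability conditions of the three components of `N ∧ dX`, expressed through the
minimal surface operator. -/
theorem pdy_sub_pdx_components {z : ℝ × ℝ → ℝ} {p : ℝ × ℝ}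
    (hx : DifferentiableAt ℝ (pdx z) p) (hy : DifferentiableAt ℝ (pdy z) p)
    (hs : pdy (pdx z) p = pdx (pdy z) p) {M : ℝ}
    (hM : pdx (pdx z) p * (1 + (pdy z p) ^ 2) + pdy (pdy z) p * (1 + (pdx z p) ^ 2)
        - 2 * pdx z p * pdy z p * pdy (pdx z) p = M) :
    pdy (fun q => (Wel z q)⁻¹ * pdx z q * pdy z q) p
        - pdx (fun q => (Wel z q)⁻¹ * (1 + (pdy z q) ^ 2)) p
        = (Wel z p)⁻¹ ^ 3 * pdx z p * M ∧
    pdy (fun q => -((Wel z q)⁻¹ * (1 + (pdx z q) ^ 2))) p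
        - pdx (fun q => -((Wel z q)⁻¹ * pdx z q * pdy z q)) p
        = (Wel z p)⁻¹ ^ 3 * pdy z p * M ∧
    pdy (fun q => -((Wel z q)⁻¹ * pdy z q)) p - pdx (fun q => (Wel z q)⁻¹ * pdx z q) p
        = -((Wel z p)⁻¹ ^ 3 * M) := by
  have hW := hasFDerivAt_Wel_inv hx hy
  have hX := hx.hasFDerivAt
  have hY := hy.hasFDerivAt
  have hX2 : HasFDerivAt (fun q => pdx z q ^ 2) ((2 * pdx z p) • fderiv ℝ (pdx z) p) p := by
    simpa using hX.pow 2
  have hY2 : HasFDerivAt (fun q => pdy z q ^ 2) ((2 * pdy z p) • fderiv ℝ (pdy z) p) p := by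
    simpa using hY.pow 2
  have h1 := (hW.fun_mul hX).fun_mul hY
  have h2 := hW.fun_mul (hY2.const_add 1)
  have h3 := (hW.fun_mul (hX2.const_add 1)).fun_neg
  have h4 := h1.fun_neg
  have h5 := (hW.fun_mul hY).fun_neg
  have h6 := hW.fun_mul hX
  have hWp := (Wel_pos z p).ne'
  have hWsq : (Wel z p)⁻¹ = (Wel z p)⁻¹ ^ 3 * (1 + pdx z p ^ 2 + pdy z p ^ 2) := by
    rw [← Wel_sq]
    field_simp
  have hr : fderiv ℝ (pdx z) p (1, 0) = pdx (pdx z) p := rfl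
  have hs' : fderiv ℝ (pdx z) p (0, 1) = pdy (pdx z) p := rfl
  have hs'' : fderiv ℝ (pdy z) p (1, 0) = pdy (pdx z) p := hs.symm
  have ht : fderiv ℝ (pdy z) p (0, 1) = pdy (pdy z) p := rfl
  refine ⟨?_, ?_, ?_⟩
  · rw [pdy, pdx, h1.fderiv, h2.fderiv, ← hM]
    simp [hr, hs', hs'', ht]
    linear_combination (pdx z p * pdy (pdy z) p - pdy z p * pdy (pdx z) p) * hWsq
  · rw [pdy, pdx, h3.fderiv, h4.fderiv, ← hM]
    simp [hr, hs', hs'', ht]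
    linear_combination (pdy z p * pdx (pdx z) p - pdx z p * pdy (pdx z) p) * hWsq
  · rw [pdy, pdx, h5.fderiv, h6.fderiv, ← hM]
    simp [hr, hs', hs'', ht]
    linear_combination (-(pdx (pdx z) p + pdy (pdy z) p)) * hWsq

/-- a nonparametric `C²` surface over a simply connected open set `Ω` is a
minimal surface iff the form `N ∧ dX` is a total differential `-dX*`, `X* = (a,b,c)`. -/
theorem minimal_surface_iff_total_differential
    (Ω : Set (ℝ × ℝ)) (hΩ : IsOpen Ω) (hsc : SimplyConnectedSpace Ω)
    (z : ℝ × ℝ → ℝ) (hz : ContDiffOn ℝ 2 z Ω) :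
    (∀ p ∈ Ω,
      pdx (pdx z) p * (1 + (pdy z p) ^ 2) + pdy (pdy z) p * (1 + (pdx z p) ^ 2)
        - 2 * pdx z p * pdy z p * pdy (pdx z) p = 0) ↔
    (∃ a b c : ℝ × ℝ → ℝ,
      ContDiffOn ℝ 2 a Ω ∧ ContDiffOn ℝ 2 b Ω ∧ ContDiffOn ℝ 2 c Ω ∧
      ∀ p ∈ Ω,
        pdx a p = (Wel z p)⁻¹ * pdx z p * pdy z p ∧
        pdy a p = (Wel z p)⁻¹ * (1 + (pdy z p) ^ 2) ∧
        pdx b p = -((Wel z p)⁻¹ * (1 + (pdx z p) ^ 2)) ∧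
        pdy b p = -((Wel z p)⁻¹ * pdx z p * pdy z p) ∧
        pdx c p = -((Wel z p)⁻¹ * pdy z p) ∧
        pdy c p = (Wel z p)⁻¹ * pdx z p) := by
  have hd : ∀ p ∈ Ω, DifferentiableAt ℝ (pdx z) p ∧ DifferentiableAt ℝ (pdy z) p := fun p hp =>
    ⟨((contDiffOn_pdx hΩ hz).differentiableOn one_ne_zero).differentiableAt (hΩ.mem_nhds hp),
      ((contDiffOn_pdy hΩ hz).differentiableOn one_ne_zero).differentiableAt (hΩ.mem_nhds hp)⟩
  constructor
  · intro hmin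
    have hcl := fun p hp => pdy_sub_pdx_components (hd p hp).1 (hd p hp).2
      (pdy_pdx_eq_pdx_pdy hΩ hz hp) (hmin p hp)
    simp only [mul_zero, neg_zero, sub_eq_zero] at hcl
    have hW := contDiffOn_Wel_inv hΩ hz
    have hzx := contDiffOn_pdx hΩ hz
    have hzy := contDiffOn_pdy hΩ hz
    obtain ⟨a, ha, ha'⟩ := exists_primitive_of_pdy_eq_pdx hΩ ((hW.mul hzx).mul hzy)
      (hW.mul (contDiffOn_const.add (hzy.pow 2))) fun p hp => (hcl p hp).1
    obtain ⟨b, hb, hb'⟩ := exists_primitive_of_pdy_eq_pdx hΩ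
      (hW.mul (contDiffOn_const.add (hzx.pow 2))).neg ((hW.mul hzx).mul hzy).neg
      fun p hp => (hcl p hp).2.1
    obtain ⟨c, hc, hc'⟩ := exists_primitive_of_pdy_eq_pdx hΩ (hW.mul hzy).neg (hW.mul hzx)
      fun p hp => (hcl p hp).2.2
    exact ⟨a, b, c, ha, hb, hc, fun p hp => ⟨(ha' p hp).1, (ha' p hp).2, (hb' p hp).1,
      (hb' p hp).2, (hc' p hp).1, (hc' p hp).2⟩⟩
  · rintro ⟨a, b, c, -, -, hc, h⟩ p hp
    have hmixed := pdy_pdx_eq_pdx_pdy hΩ hc hp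
    rw [pdy_congr hΩ (fun q hq => (h q hq).2.2.2.2.1) hp,
      pdx_congr hΩ (fun q hq => (h q hq).2.2.2.2.2) hp] at hmixed
    have hcl := (pdy_sub_pdx_components (hd p hp).1 (hd p hp).2
      (pdy_pdx_eq_pdx_pdy hΩ hz hp) rfl).2.2
    rw [sub_eq_zero.2 hmixed, eq_comm, neg_eq_zero] at hcl
    exact (mul_eq_zero.1 hcl).resolve_left (pow_ne_zero 3 (inv_ne_zero (Wel_pos z p).ne'))
end

section
/- Let g satisfy Assumption A and condition (M), let Ω ⊆ ℝ² be open and simply connected, and let u ∈ C²(Ω) with ∇u(x,y) ≠ 0 for all (x,y) ∈ Ω. If u solves div( (g'(|∇u|)/|∇u|) ∇u ) = 0 on Ω, then there exist functions a, b, c ∈ C²(Ω) such that on Ω: ∇a = ( Ξ(|∇u|) u_x u_y , Ξ(|∇u|)(1+u_y²) + ϑ(|∇u|) ), ∇b = ( −[Ξ(|∇u|)(1+u_x²) + ϑ(|∇u|)] , −Ξ(|∇u|) u_x u_y ), and ∇c = ( −Ξ(|∇u|) u_y , Ξ(|∇u|) u_x ). (These conditions express −dX* = N̂ ∧ dX for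 X* = (a,b,c), where X(x,y) = (x,y,u(x,y)) and N̂ is the asymptotic normal with components N̂₁ = −Ξ(|∇u|)u_x, N̂₂ = −Ξ(|∇u|)u_y, N̂₃ = Ξ(|∇u|) + ϑ(|∇u|).) -/
open Real Filter Set

/-- `|∇u|`, the Euclidean norm of the gradient. -/
noncomputable def gnorm (u : ℝ × ℝ → ℝ) (p : ℝ × ℝ) : ℝ :=
  Real.sqrt ((pdx u p) ^ 2 + (pdy u p) ^ 2)

/-- `Ξ(t) = g'(t)/t`. -/
noncomputable def Xi (g : ℝ → ℝ) (t : ℝ) : ℝ := deriv g t / t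

/-- `ϑ(t) = g(t) - t g'(t) - Ξ(t)`. -/
noncomputable def theta (g : ℝ → ℝ) (t : ℝ) : ℝ := g t - t * deriv g t - Xi g t

/-- Assumption A: `g` is `C²` on `[0,∞)`, `g'(0) = 0`, `g'' > 0` on `(0,∞)`,
and `g` has linear growth. -/
def AssumptionA (g : ℝ → ℝ) : Prop :=
  ContDiffOn ℝ 2 g (Set.Ici 0) ∧
  derivWithin g (Set.Ici 0) 0 = 0 ∧
  (∀ t : ℝ, 0 < t → 0 < deriv (deriv g) t) ∧
  ∃ a A b B : ℝ, 0 < a ∧ 0 < A ∧ 0 ≤ b ∧ 0 ≤ B ∧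
    ∀ t : ℝ, 0 ≤ t → a * t - b ≤ g t ∧ g t ≤ A * t + B

/-- Condition (M): `g(t) - t g'(t) → 0` as `t → ∞`. -/
def CondM (g : ℝ → ℝ) : Prop :=
  Filter.Tendsto (fun t => g t - t * deriv g t) Filter.atTop (nhds 0)

open Topology Bundle

/-- On a simply connected, locally path connected space, a family of local functions whose
differences are locally constant comes from a single global function. -/
theorem SimplyConnectedSpace.exists_glue_locally_const {X G : Type*} [TopologicalSpace X]
    [SimplyConnectedSpace X] [LocallyPathConnectedSpace X] [AddCommGroup G]
    (U : X → Set X) (hU : ∀ i, IsOpen (U i)) (hmem : ∀ x, x ∈ U x) (f : X → X → G)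
    (hf : ∀ i j, ∀ x ∈ U i ∩ U j, ∀ᶠ y in 𝓝 x, f i y - f j y = f i x - f j x) :
    ∃ F : X → G, ∀ i, ∀ x ∈ U i, ∀ᶠ y in 𝓝 x, F y - f i y = F x - f i x := by
  let _ : TopologicalSpace G := ⊥
  have _ : DiscreteTopology G := ⟨rfl⟩
  let Z : FiberBundleCore X X G :=
    { baseSet := U
      isOpen_baseSet := hU
      indexAt := id
      mem_baseSet_at := hmem
      coordChange := fun i j x v => v + (f i x - f j x)
      coordChange_self := by intros; simp
      continuousOn_coordChange := by
        rintro i j ⟨x, v⟩ ⟨hx, -⟩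
        refine ContinuousAt.continuousWithinAt ?_
        have h : ContinuousAt (fun p : X × G => p.2 + (f i x - f j x)) (x, v) :=
          (continuous_of_discreteTopology (f := fun w : G => w + (f i x - f j x))).continuousAt.comp
            continuousAt_snd
        refine h.congr ?_
        filter_upwards [continuousAt_fst.eventually (hf i j x hx)] with p hp
        rw [hp]
      coordChange_comp := by intros; abel }
  have cov : IsCoveringMap (π G Z.Fiber) := FiberBundle.isCoveringMap
  obtain ⟨x₀⟩ : Nonempty X := inferInstance
  obtain ⟨s, ⟨-, hs⟩, -⟩ := cov.existsUnique_continuousMap_lifts (ContinuousMap.id X) x₀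
    (⟨x₀, (0 : G)⟩ : TotalSpace G Z.Fiber) rfl
  have hs' : ∀ x, (s x).proj = x := fun x => congrFun hs x
  refine ⟨fun x => (show G from (s x).2) + f x x, fun i x hx => ?_⟩
  have key : ∀ y, (Z.localTriv i (s y)).2 = (show G from (s y).2) + f y y - f i y := by
    intro y
    rw [Z.localTriv_apply]
    change (show G from (s y).2) + (f (s y).proj (s y).proj - f i (s y).proj) = _
    rw [hs']
    abel
  have hc : ContinuousAt (fun y => (Z.localTriv i (s y)).2) x := by
    have h1 : ContinuousAt (Z.localTriv i) (s x) :=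
      (Z.localTriv i).continuousAt ((Z.mem_localTriv_source i (s x)).2 (by rwa [hs']))
    exact continuousAt_snd.comp (h1.comp s.continuous.continuousAt)
  have hev : ∀ᶠ y in 𝓝 x, (Z.localTriv i (s y)).2 = (Z.localTriv i (s x)).2 :=
    hc.eventually (p := fun v => v = (Z.localTriv i (s x)).2)
      (by rw [nhds_discrete]; exact Filter.mem_pure.2 rfl)
  filter_upwards [hev] with y hy
  rwa [key, key] at hy

/-- Poincaré lemma: a closed `1`-form on a simply connected open set has a primitive. -/
theorem exists_primitive_of_simplyConnected {E F : Type*} [NormedAddCommGroup E]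
    [NormedSpace ℝ E] [NormedAddCommGroup F] [NormedSpace ℝ F] [CompleteSpace F]
    {Ω : Set E} (hΩ : IsOpen Ω) [SimplyConnectedSpace Ω] {ω : E → E →L[ℝ] F}
    (hω : DifferentiableOn ℝ ω Ω)
    (hdω : ∀ a ∈ Ω, ∀ x y, fderiv ℝ ω a x y = fderiv ℝ ω a y x) :
    ∃ f : E → F, ∀ a ∈ Ω, HasFDerivAt f (ω a) a := by
  have hloc : ∀ i : Ω, ∃ r > 0, ∃ f : E → F, Metric.ball (i : E) r ⊆ Ω ∧
      ∀ a ∈ Metric.ball (i : E) r, HasFDerivAt f (ω a) a := by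
    intro i
    obtain ⟨r, hr, hball⟩ := Metric.isOpen_iff.1 hΩ i i.2
    obtain ⟨f, hf⟩ := (convex_ball (i : E) r).exists_forall_hasFDerivAt_of_fderiv_symmetric
      Metric.isOpen_ball (hω.mono hball) fun a ha => hdω a (hball ha)
    exact ⟨r, hr, f, hball, hf⟩
  choose r hr f hball hf using hloc
  have _ : LocallyPathConnectedSpace Ω := hΩ.locallyPathConnectedSpace
  obtain ⟨A, hA⟩ := SimplyConnectedSpace.exists_glue_locally_const
    (fun i : Ω => Subtype.val ⁻¹' Metric.ball (i : E) (r i))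
    (fun i => Metric.isOpen_ball.preimage continuous_subtype_val)
    (fun i => Metric.mem_ball_self (hr i)) (fun i x => f i x) (by
      rintro i j x ⟨hi, hj⟩
      obtain ⟨ε, hε, hsub⟩ := Metric.isOpen_iff.1
        (Metric.isOpen_ball.inter Metric.isOpen_ball) (x : E) ⟨hi, hj⟩
      have hd : ∀ a ∈ Metric.ball (x : E) ε, HasFDerivAt (fun y => f i y - f j y) (0 : E →L[ℝ] F) a := by
        intro a ha
        simpa [Pi.sub_def] using (hf i a (hsub ha).1).sub (hf j a (hsub ha).2)
      have hnear : ∀ᶠ y : Ω in 𝓝 x, (y : E) ∈ Metric.ball (x : E) ε :=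
        continuous_subtype_val.continuousAt.eventually (Metric.ball_mem_nhds _ hε)
      filter_upwards [hnear] with y hy
      exact Metric.isOpen_ball.is_const_of_fderiv_eq_zero (𝕜 := ℝ)
        (convex_ball _ _).isPreconnected
        (fun a ha => (hd a ha).differentiableAt.differentiableWithinAt)
        (fun a ha => (hd a ha).fderiv) hy (Metric.mem_ball_self hε))
  classical
  refine ⟨fun x => if h : x ∈ Ω then A ⟨x, h⟩ else 0, fun a ha => ?_⟩
  have hself := hf ⟨a, ha⟩ a (Metric.mem_ball_self (hr _))
  have hev := hA ⟨a, ha⟩ ⟨a, ha⟩ (Metric.mem_ball_self (hr _))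
  refine (hself.add_const (A ⟨a, ha⟩ - f ⟨a, ha⟩ a)).congr_of_eventuallyEq ?_
  rw [nhds_subtype_eq_comap, Filter.eventually_comap] at hev
  filter_upwards [hev, hΩ.mem_nhds ha] with y hy hyΩ
  rw [dif_pos hyΩ, ← hy ⟨y, hyΩ⟩ rfl]
  abel

/-- A `C¹` planar vector field `(P, Q)` with `P_y = Q_x` on a simply connected open set is the
gradient of a `C²` function. -/
theorem exists_contDiffOn_potential {Ω : Set (ℝ × ℝ)} (hΩ : IsOpen Ω) [SimplyConnectedSpace Ω]
    {P Q : ℝ × ℝ → ℝ} (hP : ContDiffOn ℝ 1 P Ω) (hQ : ContDiffOn ℝ 1 Q Ω)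
    (h : ∀ p ∈ Ω, pdy P p = pdx Q p) :
    ∃ f : ℝ × ℝ → ℝ, ContDiffOn ℝ 2 f Ω ∧ ∀ p ∈ Ω, pdx f p = P p ∧ pdy f p = Q p := by
  set ω : ℝ × ℝ → ℝ × ℝ →L[ℝ] ℝ := fun p =>
    P p • ContinuousLinearMap.fst ℝ ℝ ℝ + Q p • ContinuousLinearMap.snd ℝ ℝ ℝ with hω_def
  have hω : ContDiffOn ℝ 1 ω Ω :=
    (hP.smul contDiffOn_const).add (hQ.smul contDiffOn_const)
  obtain ⟨f, hf⟩ := exists_primitive_of_simplyConnected hΩ (hω.differentiableOn one_ne_zero) (by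
    intro a ha x y
    have hPa := ((hP.differentiableOn one_ne_zero).differentiableAt (hΩ.mem_nhds ha)).hasFDerivAt
    have hQa := ((hQ.differentiableOn one_ne_zero).differentiableAt (hΩ.mem_nhds ha)).hasFDerivAt
    have hd := (hPa.smul_const (ContinuousLinearMap.fst ℝ ℝ ℝ)).add
      (hQa.smul_const (ContinuousLinearMap.snd ℝ ℝ ℝ))
    have hlin : ∀ (L : ℝ × ℝ →L[ℝ] ℝ) (v : ℝ × ℝ), L v = v.1 * L (1, 0) + v.2 * L (0, 1) := by
      intro L v
      conv_lhs => rw [show v = v.1 • ((1 : ℝ), (0 : ℝ)) + v.2 • ((0 : ℝ), (1 : ℝ)) by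
        ext <;> simp]
      simp only [map_add, map_smul, smul_eq_mul]
    have hcl := h a ha
    unfold pdx pdy at hcl
    change HasFDerivAt ω _ a at hd
    rw [hd.fderiv]
    simp only [add_apply, ContinuousLinearMap.smulRight_apply,
      smul_apply, ContinuousLinearMap.coe_fst', ContinuousLinearMap.coe_snd',
      smul_eq_mul]
    rw [hlin (fderiv ℝ P a) x, hlin (fderiv ℝ P a) y, hlin (fderiv ℝ Q a) x,
      hlin (fderiv ℝ Q a) y, hcl]
    ring)
  refine ⟨f, ?_, fun p hp => ?_⟩
  · rw [show (2 : WithTop ℕ∞) = 1 + 1 from by norm_num,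
      contDiffOn_succ_iff_fderiv_of_isOpen hΩ]
    refine ⟨fun a ha => (hf a ha).differentiableAt.differentiableWithinAt, by simp, ?_⟩
    exact hω.congr fun a ha => (hf a ha).fderiv
  · simp [pdx, pdy, (hf p hp).fderiv, hω_def]

/-- for a `C²` solution of the `μ`-surface equation on a simply connected
domain with nonvanishing gradient, the form `N̂ ∧ dX` is a total differential `-dX*`,
`X* = (a,b,c)`. -/
theorem exists_potential_of_mu_surface
    (g : ℝ → ℝ) (hA : AssumptionA g) (hM : CondM g)
    (Ω : Set (ℝ × ℝ)) (hΩ : IsOpen Ω) (hsc : SimplyConnectedSpace Ω)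
    (u : ℝ × ℝ → ℝ) (hu : ContDiffOn ℝ 2 u Ω)
    (hne : ∀ p ∈ Ω, (pdx u p, pdy u p) ≠ (0, 0))
    (hsol : ∀ p ∈ Ω,
      pdx (fun q => Xi g (gnorm u q) * pdx u q) p
        + pdy (fun q => Xi g (gnorm u q) * pdy u q) p = 0) :
    ∃ a b c : ℝ × ℝ → ℝ,
      ContDiffOn ℝ 2 a Ω ∧ ContDiffOn ℝ 2 b Ω ∧ ContDiffOn ℝ 2 c Ω ∧
      ∀ p ∈ Ω,
        pdx a p = Xi g (gnorm u p) * pdx u p * pdy u p ∧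
        pdy a p = Xi g (gnorm u p) * (1 + (pdy u p) ^ 2) + theta g (gnorm u p) ∧
        pdx b p = -(Xi g (gnorm u p) * (1 + (pdx u p) ^ 2) + theta g (gnorm u p)) ∧
        pdy b p = -(Xi g (gnorm u p) * pdx u p * pdy u p) ∧
        pdx c p = -(Xi g (gnorm u p) * pdy u p) ∧
        pdy c p = Xi g (gnorm u p) * pdx u p := by
  have hP : ContDiffOn ℝ 1 (pdx u) Ω :=
    (hu.fderiv_of_isOpen hΩ (by norm_num)).clm_apply contDiffOn_const
  have hQ : ContDiffOn ℝ 1 (pdy u) Ω :=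
    (hu.fderiv_of_isOpen hΩ (by norm_num)).clm_apply contDiffOn_const
  have hpos : ∀ p ∈ Ω, 0 < pdx u p ^ 2 + pdy u p ^ 2 := by
    intro p hp
    have h := hne p hp
    by_contra! hle
    refine h (Prod.ext ?_ ?_) <;> simp <;> nlinarith [sq_nonneg (pdx u p), sq_nonneg (pdy u p)]
  have hNpos : ∀ p ∈ Ω, 0 < gnorm u p := fun p hp => Real.sqrt_pos.2 (hpos p hp)
  have hN : ContDiffOn ℝ 1 (gnorm u) Ω :=
    ((hP.pow 2).add (hQ.pow 2)).sqrt fun p hp => (hpos p hp).ne'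
  have hg : ContDiffOn ℝ 2 g (Ioi 0) := hA.1.mono Ioi_subset_Ici_self
  have hg' : ContDiffOn ℝ 1 (deriv g) (Ioi 0) := hg.deriv_of_isOpen isOpen_Ioi (by norm_num)
  have hS : ContDiffOn ℝ 1 (fun p => Xi g (gnorm u p)) Ω :=
    (hg'.comp hN hNpos).div hN fun p hp => (hNpos p hp).ne'
  have hG : ContDiffOn ℝ 1 (fun p => g (gnorm u p)) Ω :=
    (hg.of_le (by norm_num)).comp hN hNpos
  have hXi : ∀ p ∈ Ω, deriv g (gnorm u p) = Xi g (gnorm u p) * gnorm u p := fun p hp =>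
    (div_mul_cancel₀ _ (hNpos p hp).ne').symm
  have hNsq : ∀ p ∈ Ω, gnorm u p * gnorm u p = pdx u p ^ 2 + pdy u p ^ 2 := fun p hp =>
    Real.mul_self_sqrt (hpos p hp).le
  have hdiff : ∀ {f : ℝ × ℝ → ℝ}, ContDiffOn ℝ 1 f Ω → ∀ p ∈ Ω, HasFDerivAt f (fderiv ℝ f p) p :=
    fun hf p hp => ((hf.differentiableOn one_ne_zero).differentiableAt (hΩ.mem_nhds hp)).hasFDerivAt
  have hdG : ∀ p ∈ Ω, ∀ v, fderiv ℝ (fun q => g (gnorm u q)) p v = Xi g (gnorm u p) *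
      (pdx u p * fderiv ℝ (pdx u) p v + pdy u p * fderiv ℝ (pdy u) p v) := by
    intro p hp v
    have hgd : HasDerivAt g (deriv g (gnorm u p)) (gnorm u p) :=
      ((hg.differentiableOn two_ne_zero).differentiableAt
        (isOpen_Ioi.mem_nhds (hNpos p hp))).hasDerivAt
    have hNN : fderiv ℝ (fun q => gnorm u q * gnorm u q) p
        = fderiv ℝ (fun q => pdx u q ^ 2 + pdy u q ^ 2) p :=
      Filter.EventuallyEq.fderiv_eq (by
        filter_upwards [hΩ.mem_nhds hp] with q hq using hNsq q hq)
    have hNd := hdiff hN p hp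
    have h1 := (hNd.mul hNd).fderiv
    have h2 := (((hdiff hP p hp).pow 2).add ((hdiff hQ p hp).pow 2)).fderiv
    have h3 := congrArg (fun L : ℝ × ℝ →L[ℝ] ℝ => L v) (h1.symm.trans (hNN.trans h2))
    have h4 := (hgd.comp_hasFDerivAt p hNd).fderiv
    simp at h3
    change fderiv ℝ (g ∘ gnorm u) p v = _
    rw [h4, hXi p hp]
    simp
    linear_combination (Xi g (gnorm u p) / 2) * h3
  have hsymm : ∀ p ∈ Ω, fderiv ℝ (pdx u) p (0, 1) = fderiv ℝ (pdy u) p (1, 0) := by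
    intro p hp
    have hc : ContDiffAt ℝ 2 u p := hu.contDiffAt (hΩ.mem_nhds hp)
    have hd : DifferentiableAt ℝ (fderiv ℝ u) p :=
      (hc.fderiv_right (m := 1) (by norm_num)).differentiableAt one_ne_zero
    have hs := (hc.isSymmSndFDerivAt (by simp)) (0, 1) (1, 0)
    have e : ∀ w : ℝ × ℝ, ∀ v, fderiv ℝ (fun q => fderiv ℝ u q w) p v
        = fderiv ℝ (fderiv ℝ u) p v w := by
      intro w v
      rw [fderiv_clm_apply hd (differentiableAt_const w)]
      simp
    exact (e _ _).trans (hs.trans (e _ _).symm)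
  have hmul : ∀ {f h : ℝ × ℝ → ℝ}, ContDiffOn ℝ 1 f Ω → ContDiffOn ℝ 1 h Ω → ∀ p ∈ Ω, ∀ v,
      fderiv ℝ (fun q => f q * h q) p v = f p * fderiv ℝ h p v + h p * fderiv ℝ f p v := by
    intro f h hf hh p hp v
    have h1 := ((hdiff hf p hp).mul (hdiff hh p hp)).fderiv
    change fderiv ℝ (f * h) p v = _
    rw [h1]
    simp
  have hsub : ∀ {f h : ℝ × ℝ → ℝ}, ContDiffOn ℝ 1 f Ω → ContDiffOn ℝ 1 h Ω → ∀ p ∈ Ω, ∀ v,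
      fderiv ℝ (fun q => f q - h q) p v = fderiv ℝ f p v - fderiv ℝ h p v := by
    intro f h hf hh p hp v
    have h1 := ((hdiff hf p hp).sub (hdiff hh p hp)).fderiv
    change fderiv ℝ (f - h) p v = _
    rw [h1]
    simp
  have hneg : ∀ (f : ℝ × ℝ → ℝ) p v, fderiv ℝ (fun q => -f q) p v = -fderiv ℝ f p v := by
    intro f p v
    rw [fderiv_fun_neg]
    simp
  have hSP := hS.mul hP
  have hSQ := hS.mul hQ
  have hSPQ := hSP.mul hQ
  have hSPP := hSP.mul hP
  have hSQQ := hSQ.mul hQ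
  have hsol' : ∀ p ∈ Ω, fderiv ℝ (fun q => Xi g (gnorm u q) * pdx u q) p (1, 0)
      = -fderiv ℝ (fun q => Xi g (gnorm u q) * pdy u q) p (0, 1) := fun p hp =>
    eq_neg_of_add_eq_zero_left (hsol p hp)
  obtain ⟨a, ha, ha'⟩ := exists_contDiffOn_potential hΩ hSPQ (hG.sub hSPP) (by
    intro p hp
    refine (hmul hSP hQ p hp _).trans ((?_ : _ = _).trans (hsub hG hSPP p hp _).symm)
    rw [hmul hSP hP p hp, hdG p hp, ← hsymm p hp, hsol' p hp, hmul hS hP p hp, hmul hS hQ p hp]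
    ring)
  obtain ⟨b, hb, hb'⟩ := exists_contDiffOn_potential hΩ (hG.sub hSQQ).neg hSPQ.neg (by
    intro p hp
    refine (hneg _ p _).trans ((?_ : _ = _).trans (hneg _ p _).symm)
    refine congrArg Neg.neg ((hsub hG hSQQ p hp _).trans ((?_ : _ = _).trans
      (hmul hSP hQ p hp _).symm))
    rw [hmul hSQ hQ p hp, hdG p hp, hsymm p hp, hsol' p hp]
    ring)
  obtain ⟨c, hc, hc'⟩ := exists_contDiffOn_potential hΩ hSQ.neg hSP (by
    intro p hp
    exact (hneg _ p _).trans (hsol' p hp).symm)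
  refine ⟨a, b, c, ha, hb, hc, fun p hp => ?_⟩
  have hθ : theta g (gnorm u p) = g (gnorm u p)
      - Xi g (gnorm u p) * (pdx u p ^ 2 + pdy u p ^ 2) - Xi g (gnorm u p) := by
    rw [theta, hXi p hp, ← hNsq p hp]
    ring
  refine ⟨(ha' p hp).1, ?_, ?_, (hb' p hp).2, (hc' p hp).1, (hc' p hp).2⟩
  · rw [(ha' p hp).2, hθ]
    ring
  · rw [(hb' p hp).1, hθ]
    ring
end
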